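/- Camerlo–Gao theorem: topological conjugacy of homeomorphisms of the Cantor set is Borel bireducible with isomorphism of countable graphs. Precisely, let K = ℕ → Bool, let P = {(f, g) ∈ C(K,K) × C(K,K) : g ∘ f = id ∧ f ∘ g = id} (a closed, hence Polish, subspace), and define conjugacy on P by (f, g) ∼ (f', g') iff there exists (h, h') ∈ P with h ∘ f = f' ∘ h. Let R be graph isomorphism on M = (ℕ × ℕ → Bool). Then there exist a Borel measurable Φ : M → P with x R y ↔ Φ x ∼ Φ y for all x, y ∈ M, and a Borel measurable Ψ : P → M with p ∼ q ↔ Ψ p R Ψ q for all p, q ∈ P. -/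

import Mathlib

/-- The Cantor space. -/
abbrev CantorK : Type := ℕ → Bool

instance : MeasurableSpace C(CantorK, CantorK) := borel _
instance : BorelSpace C(CantorK, CantorK) := ⟨rfl⟩

/-- Homeomorphisms of the Cantor set, coded as mutually inverse pairs of continuous
self-maps; a closed subspace of `C(K,K) × C(K,K)`. -/
def CantorPairs : Set (C(CantorK, CantorK) × C(CantorK, CantorK)) :=
  {p | ⇑p.2 ∘ ⇑p.1 = id ∧ ⇑p.1 ∘ ⇑p.2 = id}

/-- Topological conjugacy of homeomorphisms of the Cantor set. -/
def ConjRel (p q : CantorPairs) : Prop :=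
  ∃ r : CantorPairs, ⇑r.1.1 ∘ ⇑p.1.1 = ⇑q.1.1 ∘ ⇑r.1.1

/-- Isomorphism of countable graphs, coded as points of `(ℕ × ℕ) → Bool`. -/
def GraphIso (x y : (ℕ × ℕ) → Bool) : Prop :=
  ∃ π : ℕ ≃ ℕ, ∀ i j : ℕ, x (π i, π j) = y (i, j)

/-!
A homeomorphism `f` of the Cantor space is determined up to conjugacy by the isomorphism type of the
relation `f(U) ⊆ V` between clopen sets: it recovers the inclusion of clopen sets, by Stone duality
the space, and then `f`. Coding this relation on the countable set of clopen sets is a Borel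
operation on `f`.

Conversely, for a graph `G` on a countable set `V`, let every vertex carry a Cantor coordinate that
moves by a north-south map, with one repelling and one attracting fixed point, and let every pair of
vertices carry a Boolean flag, which for an edge of `G` flips as long as both ends are in the
northern half. A point whose vertex coordinates are all fixed is then fixed if and only if the
vertices at the north pole form an independent set, because otherwise some flag flips forever; and a
fixed point is connected to another one by a two-sided orbit if and only if the flags agree and the
independent set grows. Therefore the fixed points above a minimal one form the order of independent
sets of `G`, from which `G` is recovered: vertices are atoms, and two of them are nonadjacent if and
only if they have an upper bound. Binary relations on `ℕ` are first turned into graphs by gadgets.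
-/

open Filter Function Set TopologicalSpace Topology

section Conjugacy

variable {X Y Z : Type*} [TopologicalSpace X] [TopologicalSpace Y] [TopologicalSpace Z]

/-- Topological conjugacy of self-homeomorphisms of two possibly different spaces. -/
def IsConjugate (f : X ≃ₜ X) (g : Y ≃ₜ Y) : Prop :=
  ∃ h : X ≃ₜ Y, Semiconj h f g

theorem IsConjugate.symm {f : X ≃ₜ X} {g : Y ≃ₜ Y} : IsConjugate f g → IsConjugate g f := by
  rintro ⟨h, hh⟩
  exact ⟨h.symm, hh.inverse_left h.left_inv h.right_inv⟩

theorem IsConjugate.trans {f : X ≃ₜ X} {g : Y ≃ₜ Y} {k : Z ≃ₜ Z} :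
    IsConjugate f g → IsConjugate g k → IsConjugate f k := by
  rintro ⟨h, hh⟩ ⟨h', hh'⟩
  exact ⟨h.trans h', hh'.comp_left hh⟩

theorem isConjugate_symm_trans_trans (f : X ≃ₜ X) (h : X ≃ₜ Y) :
    IsConjugate f ((h.symm.trans f).trans h) :=
  ⟨h, fun x => by simp⟩

theorem isConjugate_symm_trans_trans_iff {f g : X ≃ₜ X} {h : X ≃ₜ Y} :
    IsConjugate ((h.symm.trans f).trans h) ((h.symm.trans g).trans h) ↔ IsConjugate f g := by
  have hf := isConjugate_symm_trans_trans f h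
  have hg := isConjugate_symm_trans_trans g h
  exact ⟨fun H => (hf.trans H).trans hg.symm, fun H => (hf.symm.trans H).trans hg⟩

end Conjugacy

namespace CantorPairs

/-- The points of `CantorPairs` as bundled homeomorphisms of the Cantor space. -/
def equivHomeomorph : CantorPairs ≃ (CantorK ≃ₜ CantorK) where
  toFun p :=
    { toFun := p.1.1
      invFun := p.1.2
      left_inv := congrFun p.2.1
      right_inv := congrFun p.2.2
      continuous_toFun := p.1.1.continuous
      continuous_invFun := p.1.2.continuous }
  invFun h := ⟨(h, h.symm), h.symm_comp_self, h.self_comp_symm⟩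

theorem conjRel_iff_isConjugate {p q : CantorPairs} :
    ConjRel p q ↔ IsConjugate (equivHomeomorph p) (equivHomeomorph q) := by
  constructor
  · rintro ⟨r, hr⟩
    exact ⟨equivHomeomorph r, congrFun hr⟩
  · rintro ⟨h, hh⟩
    exact ⟨equivHomeomorph.symm h, funext hh⟩

theorem continuous_equivHomeomorph_symm {P : Type*} [TopologicalSpace P]
    {F : P → CantorK ≃ₜ CantorK} (hF : Continuous fun a : P × CantorK => F a.1 a.2)
    (hF' : Continuous fun a : P × CantorK => (F a.1).symm a.2) :
    Continuous fun a => equivHomeomorph.symm (F a) :=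
  ((ContinuousMap.continuous_of_continuous_uncurry _ hF).prodMk
    (ContinuousMap.continuous_of_continuous_uncurry _ hF')).subtype_mk _

end CantorPairs

section RelationCodes

variable {α β : Type*}

/-- The binary relation coded by a point of `ℕ × ℕ → Bool`. -/
def RelOf (x : ℕ × ℕ → Bool) (i j : ℕ) : Prop :=
  x (i, j) = true

open Classical in
/-- The code of a binary relation on a set enumerated by `e`. -/
noncomputable def relCode (e : ℕ ≃ α) (r : α → α → Prop) (a : ℕ × ℕ) : Bool :=
  decide (r (e a.1) (e a.2))

theorem graphIso_iff_nonempty_relIso {x y : ℕ × ℕ → Bool} :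
    GraphIso x y ↔ Nonempty (RelOf x ≃r RelOf y) := by
  constructor
  · rintro ⟨π, hπ⟩
    exact ⟨RelIso.symm ⟨π, by simp [RelOf, hπ]⟩⟩
  · rintro ⟨θ⟩
    exact ⟨θ.symm.toEquiv, fun i j => Bool.eq_iff_iff.2 θ.symm.map_rel_iff⟩

/-- The enumeration is an isomorphism from the coded relation to the relation itself. -/
def relOfRelCodeIso (e : ℕ ≃ α) (r : α → α → Prop) : RelOf (relCode e r) ≃r r where
  toEquiv := e
  map_rel_iff' := by simp [RelOf, relCode]

theorem graphIso_relCode_iff {e : ℕ ≃ α} {d : ℕ ≃ β} {r : α → α → Prop} {s : β → β → Prop} :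
    GraphIso (relCode e r) (relCode d s) ↔ Nonempty (r ≃r s) := by
  rw [graphIso_iff_nonempty_relIso]
  exact ⟨fun ⟨θ⟩ => ⟨((relOfRelCodeIso e r).symm.trans θ).trans (relOfRelCodeIso d s)⟩,
    fun ⟨θ⟩ => ⟨((relOfRelCodeIso e r).trans θ).trans (relOfRelCodeIso d s).symm⟩⟩

theorem measurable_relCode {P : Type*} [MeasurableSpace P] (e : ℕ ≃ α) {r : P → α → α → Prop}
    (hr : ∀ a b, MeasurableSet {p | r p a b}) : Measurable fun p => relCode e (r p) := by
  refine measurable_pi_iff.2 fun a => measurable_to_bool ?_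
  simpa [relCode, preimage] using hr (e a.1) (e a.2)

end RelationCodes

section StoneDuality

variable {X Y : Type*} [TopologicalSpace X] [TopologicalSpace Y]

/-- Images of clopen sets under a homeomorphism. -/
def clopensCongr (h : X ≃ₜ Y) : Clopens X ≃o Clopens Y where
  toFun U := ⟨h.symm ⁻¹' U, U.isClopen.preimage h.symm.continuous⟩
  invFun V := ⟨h ⁻¹' V, V.isClopen.preimage h.continuous⟩
  left_inv U := by ext; simp
  right_inv V := by ext; simp
  map_rel_iff' := h.symm.surjective.preimage_subset_preimage_iff

theorem mem_clopensCongr {h : X ≃ₜ Y} {U : Clopens X} {y : Y} :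
    y ∈ clopensCongr h U ↔ h.symm y ∈ U := Iff.rfl

theorem apply_mem_clopensCongr {h : X ≃ₜ Y} {U : Clopens X} {x : X} :
    h x ∈ clopensCongr h U ↔ x ∈ U := by
  rw [mem_clopensCongr, h.symm_apply_apply]

theorem clopensCongr_le_iff {h : X ≃ₜ Y} {U : Clopens X} {V : Clopens Y} :
    clopensCongr h U ≤ V ↔ MapsTo h U V :=
  ⟨fun H _ hx => H (apply_mem_clopensCongr.2 hx),
    fun H y hy => by simpa using H (mem_clopensCongr.1 hy)⟩

theorem eq_of_forall_mem_clopens [TotallySeparatedSpace X] {x y : X}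
    (h : ∀ U : Clopens X, x ∈ U → y ∈ U) : x = y := by
  by_contra hne
  obtain ⟨U, hU, hx, hy⟩ := exists_isClopen_of_totally_separated hne
  exact hy (h ⟨U, hU⟩ hx)

theorem clopensCongr_injective [TotallySeparatedSpace Y] :
    Injective (clopensCongr : (X ≃ₜ Y) → (Clopens X ≃o Clopens Y)) := by
  refine fun h k hhk => Homeomorph.ext fun x => eq_of_forall_mem_clopens fun V hV => ?_
  obtain ⟨U, rfl⟩ := (clopensCongr h).surjective V
  rw [hhk, apply_mem_clopensCongr]
  exact apply_mem_clopensCongr.1 hV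

/-- By compactness, the ultrafilter of clopen sets around a point `x` is carried to the
neighbourhoods of some point of `Y`. -/
theorem exists_forall_mem_orderIso_iff [CompactSpace Y] (α : Clopens X ≃o Clopens Y) (x : X) :
    ∃ y : Y, ∀ U : Clopens X, y ∈ α U ↔ x ∈ U := by
  have nonempty_of_mem {U : Clopens X} (hU : x ∈ U) : (α U : Set Y).Nonempty := by
    by_contra hne
    have hbot : α U = ⊥ := Clopens.ext (not_nonempty_iff_eq_empty.1 hne)
    rw [_root_.map_eq_bot_iff] at hbot
    subst hbot
    exact hU
  have : Nonempty {U : Clopens X // x ∈ U} := ⟨⟨⊤, mem_univ x⟩⟩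
  obtain ⟨y, hy⟩ : (⋂ U : {U : Clopens X // x ∈ U}, (α U : Set Y)).Nonempty :=
    IsCompact.nonempty_iInter_of_directed_nonempty_isCompact_isClosed _
      (fun U V => ⟨⟨U ⊓ V, U.2, V.2⟩, α.monotone inf_le_left, α.monotone inf_le_right⟩)
      (fun U => nonempty_of_mem U.2) (fun U => (α U).isClosed.isCompact) (fun U => (α U).isClosed)
  rw [mem_iInter] at hy
  refine ⟨y, fun U => ⟨fun hyU => ?_, fun hxU => hy ⟨U, hxU⟩⟩⟩
  by_contra hxU
  have hyU' : y ∈ α Uᶜ := hy ⟨Uᶜ, hxU⟩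
  rw [map_compl] at hyU'
  exact hyU' hyU

theorem continuous_of_mem_clopens_iff [CompactSpace Y] [T2Space Y] [TotallyDisconnectedSpace Y]
    {f : X → Y} {β : Clopens Y → Clopens X} (h : ∀ U x, x ∈ β U ↔ f x ∈ U) : Continuous f := by
  refine isTopologicalBasis_isClopen.continuous_iff.2 fun U hU => ?_
  rw [show f ⁻¹' U = β ⟨U, hU⟩ from Set.ext fun x => (h ⟨U, hU⟩ x).symm]
  exact (β ⟨U, hU⟩).isOpen

variable [CompactSpace X] [T2Space X] [TotallyDisconnectedSpace X]
  [CompactSpace Y] [T2Space Y] [TotallyDisconnectedSpace Y]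

theorem clopensCongr_surjective :
    Surjective (clopensCongr : (X ≃ₜ Y) → (Clopens X ≃o Clopens Y)) := by
  intro α
  choose f hf using exists_forall_mem_orderIso_iff α
  choose g hg using exists_forall_mem_orderIso_iff α.symm
  refine ⟨⟨⟨f, g, fun x => ?_, fun y => ?_⟩, ?_, ?_⟩, OrderIso.ext <| funext fun U => ?_⟩
  · exact (eq_of_forall_mem_clopens fun U hU => by simpa [hf, hU] using hg (f x) (α U)).symm
  · exact (eq_of_forall_mem_clopens fun U hU => by simpa [hg, hU] using hf (g y) (α.symm U)).symm
  · exact continuous_of_mem_clopens_iff (β := α.symm) fun U x => by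
      rw [← hf, α.apply_symm_apply]
  · exact continuous_of_mem_clopens_iff (β := α) fun U y => by
      rw [← hg, α.symm_apply_apply]
  · ext y
    change g y ∈ U ↔ y ∈ α U
    rw [← hg, α.symm_apply_apply]

theorem isConjugate_iff_exists_semiconj_clopensCongr {f : X ≃ₜ X} {g : Y ≃ₜ Y} :
    IsConjugate f g ↔
      ∃ α : Clopens X ≃o Clopens Y, Semiconj α (clopensCongr f) (clopensCongr g) := by
  rw [clopensCongr_surjective.exists]
  refine exists_congr fun h => ?_
  calc Semiconj h f g ↔ f.trans h = h.trans g :=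
      (DFunLike.ext_iff (f := f.trans h) (g := h.trans g)).symm
    _ ↔ clopensCongr (f.trans h) = clopensCongr (h.trans g) := clopensCongr_injective.eq_iff.symm
    _ ↔ Semiconj (clopensCongr h) (clopensCongr f) (clopensCongr g) := DFunLike.ext_iff

end StoneDuality

section Order

/-- As `a` reflects the order, `x ≤ y` says that all elements above `a y` are above `a x`. Hence the
relation `a x ≤ y` determines the order, and then `a`. -/
theorem exists_orderIso_semiconj_iff_nonempty_relIso {P Q : Type*} [PartialOrder P] [PartialOrder Q]
    (a : P ↪o P) (b : Q ↪o Q) :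
    (∃ α : P ≃o Q, Semiconj α a b) ↔
      Nonempty ((fun x y => a x ≤ y) ≃r (fun x y => b x ≤ y)) := by
  constructor
  · rintro ⟨α, hα⟩
    exact ⟨α.toEquiv, fun {x y} => by simp [← hα.eq]⟩
  · rintro ⟨α⟩
    have hα (x y : P) : b (α x) ≤ α y ↔ a x ≤ y := α.map_rel_iff
    have le_iff (x y : P) : α x ≤ α y ↔ x ≤ y := by
      rw [← b.le_iff_le, ← a.le_iff_le, ← forall_ge_iff_le, ← forall_ge_iff_le, α.surjective.forall]
      simp only [hα]
    let β : P ≃o Q := ⟨α.toEquiv, fun {x y} => le_iff x y⟩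
    refine ⟨β, fun x => eq_of_forall_ge_iff fun y => ?_⟩
    obtain ⟨y, rfl⟩ := β.surjective y
    exact (β.le_iff_le.trans (hα x y).symm)

end Order

section ClopenReduction

instance : Countable (Clopens CantorK) :=
  Clopens.countable_iff_secondCountable.2 inferInstance

instance : Infinite (Clopens CantorK) := by
  refine Infinite.of_injective (fun n : ℕ =>
    (⟨{c | c n = true}, (isClopen_discrete {true}).preimage (continuous_apply n)⟩ :
      Clopens CantorK)) fun m n hmn => ?_
  have hcoe : {c : CantorK | c m = true} = {c | c n = true} := congrArg SetLike.coe hmn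
  have hmem : (fun k => decide (k = m)) ∈ {c : CantorK | c n = true} := by simp [← hcoe]
  exact (of_decide_eq_true hmem).symm

theorem isConjugate_iff_nonempty_mapsTo_relIso {X Y : Type*} [TopologicalSpace X] [CompactSpace X]
    [T2Space X] [TotallyDisconnectedSpace X] [TopologicalSpace Y] [CompactSpace Y]
    [T2Space Y] [TotallyDisconnectedSpace Y] {f : X ≃ₜ X} {g : Y ≃ₜ Y} :
    IsConjugate f g ↔ Nonempty ((fun U V : Clopens X => MapsTo f U V) ≃r
      (fun U V : Clopens Y => MapsTo g U V)) := by
  simp only [isConjugate_iff_exists_semiconj_clopensCongr, ← clopensCongr_le_iff]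
  exact exists_orderIso_semiconj_iff_nonempty_relIso (clopensCongr f).toOrderEmbedding
    (clopensCongr g).toOrderEmbedding

theorem measurableSet_setOf_mapsTo (U V : Clopens CantorK) :
    MeasurableSet {p : CantorPairs | MapsTo p.1.1 U V} :=
  ((ContinuousMap.isOpen_setOfPred_mapsTo U.isClosed.isCompact V.isOpen).preimage
    (continuous_fst.comp continuous_subtype_val)).measurableSet

end ClopenReduction

section ConnectingOrbits

variable {X Y : Type*}

/-- A two-sided orbit of `F`, presented without reference to an inverse of `F`. -/
def IsFullOrbit (F : X → X) (γ : ℤ → X) : Prop :=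
  ∀ n, γ (n + 1) = F (γ n)

theorem IsFullOrbit.map {F : X → X} {G : Y → Y} {γ : ℤ → X} {h : X → Y} (hγ : IsFullOrbit F γ)
    (hh : Semiconj h F G) : IsFullOrbit G fun n => h (γ n) :=
  fun n => (congrArg h (hγ n)).trans (hh (γ n))

variable [TopologicalSpace X] [TopologicalSpace Y]

/-- Some two-sided orbit of `F` runs from `p` to `q`. -/
def ConnectsTo (F : X → X) (p q : X) : Prop :=
  ∃ γ, IsFullOrbit F γ ∧ Tendsto γ atBot (𝓝 p) ∧ Tendsto γ atTop (𝓝 q)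

theorem connectsTo_self {F : X → X} {p : X} (hp : F p = p) : ConnectsTo F p p :=
  ⟨fun _ => p, fun _ => hp.symm, tendsto_const_nhds, tendsto_const_nhds⟩

theorem ConnectsTo.map {F : X → X} {G : Y → Y} {h : X → Y} {p q : X} (H : ConnectsTo F p q)
    (hc : Continuous h) (hh : Semiconj h F G) : ConnectsTo G (h p) (h q) :=
  let ⟨γ, hγ, hp, hq⟩ := H
  ⟨fun n => h (γ n), hγ.map hh, (hc.tendsto p).comp hp, (hc.tendsto q).comp hq⟩

theorem connectsTo_map_iff {F : X → X} {G : Y → Y} {h : X ≃ₜ Y} (hh : Semiconj h F G) {p q : X} :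
    ConnectsTo G (h p) (h q) ↔ ConnectsTo F p q := by
  refine ⟨fun H => ?_, fun H => H.map h.continuous hh⟩
  simpa using H.map h.symm.continuous (hh.inverse_left h.left_inv h.right_inv)

end ConnectingOrbits

section NorthSouth

/-- The prefix replacement `00 ↦ 0`, `01 ↦ 10`, `1 ↦ 11`, which moves every nonconstant sequence
away from the constant sequence `false` and towards the constant sequence `true`. In the first case
`n - 1` is truncated, so that the entry `c 0` is doubled. -/
def northSouthMap (c : CantorK) (n : ℕ) : Bool :=
  c (if c 0 then n - 1 else if c 1 then Equiv.swap 0 1 n else n + 1)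

theorem compl_northSouthMap_compl_northSouthMap (c : CantorK) :
    (northSouthMap (northSouthMap c)ᶜ)ᶜ = c := by
  funext n
  cases h0 : c 0 <;> cases h1 : c 1 <;> rcases n with _ | _ | n <;>
    simp [northSouthMap, h0, h1, Equiv.swap_apply_of_ne_of_ne]

theorem continuous_northSouthMap : Continuous northSouthMap := by
  have continuous_eval : Continuous fun a : CantorK × ℕ => a.1 a.2 :=
    continuous_prod_of_discrete_right.2 continuous_apply
  refine continuous_pi fun n => continuous_eval.comp (continuous_id.prodMk ?_)
  exact (continuous_of_discreteTopology (f := fun b : Bool × Bool =>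
    if b.1 then n - 1 else if b.2 then Equiv.swap 0 1 n else n + 1)).comp
      (by fun_prop : Continuous fun c : CantorK => (c 0, c 1))

/-- `northSouthMap` as a homeomorphism. Complementation exchanges the two fixed points, and it
conjugates the map to its inverse. -/
def northSouth : CantorK ≃ₜ CantorK where
  toFun := northSouthMap
  invFun c := (northSouthMap cᶜ)ᶜ
  left_inv := compl_northSouthMap_compl_northSouthMap
  right_inv c := by
    simpa using congrArg compl (compl_northSouthMap_compl_northSouthMap cᶜ)
  continuous_toFun := continuous_northSouthMap
  continuous_invFun := by
    have continuous_compl : Continuous fun c : CantorK => cᶜ :=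
      continuous_pi fun n =>
        (continuous_of_discreteTopology (f := compl)).comp (continuous_apply n)
    exact continuous_compl.comp (continuous_northSouthMap.comp continuous_compl)

theorem northSouth_apply (c : CantorK) (n : ℕ) :
    northSouth c n = c (if c 0 then n - 1 else if c 1 then Equiv.swap 0 1 n else n + 1) := rfl

theorem apply_zero_le_northSouth (c : CantorK) : c 0 ≤ northSouth c 0 := by
  cases h : c 0 <;> simp [northSouth_apply, h]

theorem northSouth_succ_of_zero {c : CantorK} (h : c 0 = true) (k : ℕ) :
    northSouth c (k + 1) = c k := by
  simp [northSouth_apply, h]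

theorem northSouth_apply_of_northSouth_zero {c : CantorK} (h : northSouth c 0 = false) (k : ℕ) :
    northSouth c k = c (k + 1) := by
  cases h0 : c 0 <;> cases h1 : c 1 <;> simp_all [northSouth_apply]

theorem northSouth_const (b : Bool) : northSouth (fun _ => b) = fun _ => b := rfl

theorem eq_const_of_northSouth_eq {c : CantorK} (h : northSouth c = c) : c = fun _ => c 0 := by
  have succ_eq (k : ℕ) : c (k + 1) = c k := by
    cases h0 : c 0 with
    | false => rw [← northSouth_apply_of_northSouth_zero (c := c) (by rwa [h]), h]
    | true => rw [← northSouth_succ_of_zero h0 k, h]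
  funext k
  induction k with
  | zero => rfl
  | succ k ih => rw [succ_eq, ih]

theorem IsFullOrbit.eq_const_false_of_tendsto {γ : ℤ → CantorK} (hγ : IsFullOrbit northSouth γ)
    (h : Tendsto γ atTop (𝓝 fun _ => false)) (n : ℤ) : γ n = fun _ => false := by
  have monotone_zero : Monotone fun n => γ n 0 :=
    monotone_int_of_le_succ fun n => by rw [hγ]; exact apply_zero_le_northSouth _
  have zero_eq_false (n : ℤ) : γ n 0 = false := by
    have h0 : ∀ᶠ m in atTop, γ m 0 = false := by
      simpa only [nhds_discrete, tendsto_pure] using tendsto_pi_nhds.1 h 0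
    obtain ⟨m, hm, hnm⟩ := (h0.and (eventually_ge_atTop n)).exists
    exact le_bot_iff.1 ((monotone_zero hnm).trans_eq hm)
  funext k
  induction k generalizing n with
  | zero => exact zero_eq_false n
  | succ k ih =>
    have hn : northSouth (γ n) 0 = false := by rw [← hγ]; exact zero_eq_false (n + 1)
    rw [← northSouth_apply_of_northSouth_zero hn, ← hγ]
    exact ih (n + 1)

theorem connectsTo_northSouth_false_true :
    ConnectsTo northSouth (fun _ => false) (fun _ => true) := by
  -- At time `n ≥ 0` the orbit is at `1ⁿ⁺¹000…`, and at time `-n` its only entry `1` has index `n`.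
  refine ⟨fun n k => decide ((k : ℤ) ≤ n ∨ (k : ℤ) = -n), fun n => funext fun k => ?_,
    tendsto_pi_nhds.2 fun k => ?_, tendsto_pi_nhds.2 fun k => ?_⟩
  · simp only [northSouth_apply, Equiv.swap_apply_def]
    split_ifs <;> simp_all <;> lia
  · rw [nhds_discrete, tendsto_pure]
    filter_upwards [eventually_lt_atBot (-k : ℤ)] with n hn
    simp only [decide_eq_false_iff_not]
    lia
  · rw [nhds_discrete, tendsto_pure]
    filter_upwards [eventually_ge_atTop (k : ℤ)] with n hn
    simp [hn]

end NorthSouth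

section GraphSystem

variable {V : Type*}

/-- A Cantor coordinate for every vertex and a flag for every pair of vertices. -/
abbrev GraphState (V : Type*) : Type _ := (V → CantorK) × (V × V → Bool)

/-- The edges whose two ends both lie in the northern half of the Cantor set, that is, have initial
entry `true`. -/
def northEdges (G : SimpleGraph V) (x : V → CantorK) : Set (V × V) :=
  {a | G.Adj a.1 a.2 ∧ x a.1 0 = true ∧ x a.2 0 = true}

open Classical in
/-- The involution that flips the flags of the northern edges. -/
noncomputable def flipFlags (G : SimpleGraph V) (z : GraphState V) : GraphState V :=
  (z.1, fun a => if a ∈ northEdges G z.1 then !z.2 a else z.2 a)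

theorem flipFlags_involutive (G : SimpleGraph V) : Involutive (flipFlags G) := by
  refine fun z => Prod.ext rfl (funext fun a => ?_)
  by_cases h : a ∈ northEdges G z.1 <;> simp [flipFlags, h]

theorem continuous_flipFlags {P : Type*} [TopologicalSpace P] {G : P → SimpleGraph V}
    {z : P → GraphState V} (hG : ∀ v w, IsClopen {p | (G p).Adj v w}) (hz : Continuous z) :
    Continuous fun p => flipFlags (G p) (z p) := by
  have isClopen_north (v : V) : IsClopen {p | (z p).1 v 0 = true} :=
    (isClopen_discrete {true}).preimage (by fun_prop : Continuous fun p => (z p).1 v 0)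
  have isClopen_northEdges (a : V × V) : IsClopen {p | a ∈ northEdges (G p) (z p).1} :=
    (hG a.1 a.2).inter ((isClopen_north a.1).inter (isClopen_north a.2))
  classical
  refine hz.fst.prodMk (continuous_pi fun a => Continuous.if (fun p hp => ?_) ?_ ?_)
  · rw [(isClopen_northEdges a).frontier_eq] at hp
    exact hp.elim
  · exact (continuous_of_discreteTopology (f := not)).comp
      (by fun_prop : Continuous fun p => (z p).2 a)
  · fun_prop

/-- `flipFlags` as a homeomorphism. -/
noncomputable def flipFlagsHomeomorph (G : SimpleGraph V) : GraphState V ≃ₜ GraphState V where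
  toEquiv := (flipFlags_involutive G).toPerm
  continuous_toFun := continuous_flipFlags (fun _ _ => ⟨isClosed_const, isOpen_const⟩) continuous_id
  continuous_invFun :=
    continuous_flipFlags (fun _ _ => ⟨isClosed_const, isOpen_const⟩) continuous_id

/-- The action of `northSouth` on all vertex coordinates, leaving the flags alone. -/
def northSouthState (V : Type*) : GraphState V ≃ₜ GraphState V :=
  (Homeomorph.piCongrRight fun _ => northSouth).prodCongr (Homeomorph.refl _)

/-- Every vertex coordinate moves by `northSouth`, and the flag of an edge flips as long as both of
its ends are in the northern half. -/
noncomputable def graphHomeomorph (G : SimpleGraph V) : GraphState V ≃ₜ GraphState V :=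
  (flipFlagsHomeomorph G).trans (northSouthState V)

theorem graphHomeomorph_apply (G : SimpleGraph V) (z : GraphState V) :
    graphHomeomorph G z = (fun v => northSouth (z.1 v), (flipFlags G z).2) := rfl

theorem continuous_graphHomeomorph {P : Type*} [TopologicalSpace P] {G : P → SimpleGraph V}
    {z : P → GraphState V} (hG : ∀ v w, IsClopen {p | (G p).Adj v w}) (hz : Continuous z) :
    Continuous fun p => graphHomeomorph (G p) (z p) :=
  (northSouthState V).continuous.comp (continuous_flipFlags hG hz)

theorem continuous_graphHomeomorph_symm {P : Type*} [TopologicalSpace P] {G : P → SimpleGraph V}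
    {z : P → GraphState V} (hG : ∀ v w, IsClopen {p | (G p).Adj v w}) (hz : Continuous z) :
    Continuous fun p => (graphHomeomorph (G p)).symm (z p) :=
  continuous_flipFlags hG ((northSouthState V).symm.continuous.comp hz)

variable {G : SimpleGraph V} {S S' : Set V} {t t' : V × V → Bool}

theorem northEdges_eq_empty (hS : G.IsIndepSet S) {x : V → CantorK}
    (hx : ∀ v ∉ S, x v = fun _ => false) : northEdges G x = ∅ := by
  have mem_of_north {v : V} (hv : x v 0 = true) : v ∈ S := by
    by_contra hvS
    simp [hx v hvS] at hv
  exact eq_empty_of_forall_notMem fun a ⟨hadj, h1, h2⟩ =>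
    hS (mem_of_north h1) (mem_of_north h2) hadj.ne hadj

theorem graphHomeomorph_eq_of_isIndepSet (hS : G.IsIndepSet S) {z : GraphState V}
    (hz : ∀ v ∉ S, z.1 v = fun _ => false) :
    graphHomeomorph G z = (fun v => northSouth (z.1 v), z.2) := by
  simp [graphHomeomorph_apply, flipFlags, northEdges_eq_empty hS hz]

open Classical in
/-- The state whose vertex coordinates are constant, with value the indicator function of `S`. -/
noncomputable def restPoint (S : Set V) (t : V × V → Bool) : GraphState V :=
  (fun v _ => decide (v ∈ S), t)

theorem restPoint_fst_of_mem {v : V} (hv : v ∈ S) : (restPoint S t).1 v = fun _ => true := by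
  simp [restPoint, hv]

theorem restPoint_fst_of_notMem {v : V} (hv : v ∉ S) : (restPoint S t).1 v = fun _ => false := by
  simp [restPoint, hv]

theorem restPoint_inj : restPoint S t = restPoint S' t' ↔ S = S' ∧ t = t' := by
  refine ⟨fun h => ?_, by rintro ⟨rfl, rfl⟩; rfl⟩
  obtain ⟨hS, ht⟩ := Prod.ext_iff.1 h
  exact ⟨Set.ext fun v => by simpa [restPoint] using congrFun (congrFun hS v) 0, ht⟩

theorem graphHomeomorph_restPoint (hS : G.IsIndepSet S) (t : V × V → Bool) :
    graphHomeomorph G (restPoint S t) = restPoint S t :=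
  graphHomeomorph_eq_of_isIndepSet hS fun _ => restPoint_fst_of_notMem

theorem exists_eq_restPoint_of_graphHomeomorph_eq {z : GraphState V}
    (hz : graphHomeomorph G z = z) : ∃ S t, G.IsIndepSet S ∧ z = restPoint S t := by
  obtain ⟨hx, ht⟩ := Prod.ext_iff.1 hz
  refine ⟨{v | z.1 v 0 = true}, z.2, fun v hv w hw _ hadj => ?_, Prod.ext (funext fun v => ?_) rfl⟩
  · have hflip : (flipFlags G z).2 (v, w) = z.2 (v, w) := congrFun ht (v, w)
    have hmem : (v, w) ∈ northEdges G z.1 := ⟨hadj, hv, hw⟩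
    simp [flipFlags, hmem] at hflip
  · simpa [restPoint] using eq_const_of_northSouth_eq (congrFun hx v)

theorem subset_and_eq_of_connectsTo_restPoint (hS' : G.IsIndepSet S')
    (h : ConnectsTo (graphHomeomorph G) (restPoint S t) (restPoint S' t')) : S ⊆ S' ∧ t = t' := by
  obtain ⟨γ, hγ, hbot, htop⟩ := h
  have fst_eq_false (n : ℤ) (v : V) (hv : v ∉ S') : (γ n).1 v = fun _ => false := by
    refine (hγ.map (h := fun z => z.1 v) fun z => rfl).eq_const_false_of_tendsto ?_ n
    simpa only [restPoint_fst_of_notMem hv] using tendsto_pi_nhds.1 htop.fst_nhds v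
  have snd_eq_succ (n : ℤ) : (γ (n + 1)).2 = (γ n).2 := by
    rw [hγ, graphHomeomorph_eq_of_isIndepSet hS' (fst_eq_false n)]
  have snd_eq (n : ℤ) : (γ n).2 = (γ 0).2 := by
    simpa using Periodic.int_mul_eq (f := fun n => (γ n).2) snd_eq_succ n
  constructor
  · intro v hv
    by_contra hv'
    have hlim := tendsto_pi_nhds.1 hbot.fst_nhds v
    simp only [fst_eq_false _ v hv', restPoint_fst_of_mem hv] at hlim
    simpa using congrFun (tendsto_nhds_unique tendsto_const_nhds hlim) 0
  · have hlim := hbot.snd_nhds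
    have hlim' := htop.snd_nhds
    simp only [snd_eq] at hlim hlim'
    exact (tendsto_nhds_unique tendsto_const_nhds hlim).symm.trans
      (tendsto_nhds_unique tendsto_const_nhds hlim')

theorem connectsTo_restPoint (hS' : G.IsIndepSet S') (h : S ⊆ S') (t : V × V → Bool) :
    ConnectsTo (graphHomeomorph G) (restPoint S t) (restPoint S' t) := by
  have coordinate (v : V) :
      ConnectsTo northSouth ((restPoint S t).1 v) ((restPoint S' t).1 v) := by
    by_cases hv : v ∈ S
    · rw [restPoint_fst_of_mem hv, restPoint_fst_of_mem (h hv)]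
      exact connectsTo_self (northSouth_const true)
    rw [restPoint_fst_of_notMem hv]
    by_cases hv' : v ∈ S'
    · rw [restPoint_fst_of_mem hv']
      exact connectsTo_northSouth_false_true
    · rw [restPoint_fst_of_notMem hv']
      exact connectsTo_self (northSouth_const false)
  choose γ hγ hbot htop using coordinate
  have eq_false (n : ℤ) (v : V) (hv : v ∉ S') : γ v n = fun _ => false :=
    (hγ v).eq_const_false_of_tendsto (restPoint_fst_of_notMem (t := t) hv ▸ htop v) n
  refine ⟨fun n => (fun v => γ v n, t), fun n => ?_,
    (tendsto_pi_nhds.2 hbot).prodMk_nhds tendsto_const_nhds,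
    (tendsto_pi_nhds.2 htop).prodMk_nhds tendsto_const_nhds⟩
  rw [graphHomeomorph_eq_of_isIndepSet hS' (eq_false n)]
  exact Prod.ext (funext fun v => hγ v n) rfl

theorem connectsTo_restPoint_iff (hS' : G.IsIndepSet S') :
    ConnectsTo (graphHomeomorph G) (restPoint S t) (restPoint S' t') ↔ S ⊆ S' ∧ t = t' :=
  ⟨subset_and_eq_of_connectsTo_restPoint hS', fun ⟨h, ht⟩ => ht ▸ connectsTo_restPoint hS' h t⟩

end GraphSystem

section IndependentSets

variable {V W : Type*} {G : SimpleGraph V} {H : SimpleGraph W}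

/-- The independent sets of a graph, ordered by inclusion. -/
abbrev IndepSet (G : SimpleGraph V) : Type _ := {S : Set V // G.IsIndepSet S}

instance : OrderBot (IndepSet G) :=
  Subtype.orderBot (pairwise_empty _)

/-- A single vertex as an independent set. -/
def IndepSet.single (G : SimpleGraph V) (v : V) : IndepSet G :=
  ⟨{v}, pairwise_singleton v _⟩

theorem IndepSet.single_le {v : V} {S : IndepSet G} : single G v ≤ S ↔ v ∈ S.1 :=
  singleton_subset_iff

theorem IndepSet.single_injective : Injective (single G) :=
  fun _ _ h => singleton_injective (congrArg Subtype.val h)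

theorem IndepSet.ne_bot_iff {S : IndepSet G} : S ≠ ⊥ ↔ S.1.Nonempty :=
  Subtype.coe_ne_coe.symm.trans nonempty_iff_ne_empty.symm

theorem IndepSet.isAtom_iff {S : IndepSet G} : IsAtom S ↔ ∃ v, single G v = S := by
  rw [isAtom_iff_le_of_ge]
  constructor
  · rintro ⟨hne, hmin⟩
    obtain ⟨v, hv⟩ := ne_bot_iff.1 hne
    exact ⟨v, (single_le.2 hv).antisymm
      (hmin _ (ne_bot_iff.2 (singleton_nonempty v)) (single_le.2 hv))⟩
  · rintro ⟨v, rfl⟩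
    refine ⟨ne_bot_iff.2 (singleton_nonempty v), fun T hT hTv => ?_⟩
    obtain ⟨w, hw⟩ := ne_bot_iff.1 hT
    obtain rfl : w = v := hTv hw
    exact single_le.2 hw

theorem IndepSet.exists_single_le_iff {v w : V} :
    (∃ S : IndepSet G, single G v ≤ S ∧ single G w ≤ S) ↔ ¬G.Adj v w := by
  simp only [single_le]
  constructor
  · rintro ⟨S, hv, hw⟩ hadj
    exact S.2 hv hw hadj.ne hadj
  · refine fun hadj => ⟨⟨{v, w}, ?_⟩, by simp⟩
    simp [SimpleGraph.IsIndepSet, Set.pairwise_pair, hadj, G.adj_comm w v]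

/-- The vertices of a graph are the atoms of its order of independent sets, and two of them are
nonadjacent if and only if they have a common upper bound. -/
theorem nonempty_iso_of_indepSet_orderIso (α : IndepSet G ≃o IndepSet H) : Nonempty (G ≃g H) := by
  have exists_single_eq (v : V) : ∃ w, IndepSet.single H w = α (IndepSet.single G v) :=
    IndepSet.isAtom_iff.1 ((α.isAtom_iff _).2 (IndepSet.isAtom_iff.2 ⟨v, rfl⟩))
  choose θ hθ using exists_single_eq
  have bijective : Bijective θ := by
    refine ⟨fun v w h => IndepSet.single_injective (α.injective ?_), fun w => ?_⟩
    · rw [← hθ, ← hθ, h]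
    · obtain ⟨v, hv⟩ := IndepSet.isAtom_iff.1
        ((α.symm.isAtom_iff _).2 (IndepSet.isAtom_iff.2 ⟨w, rfl⟩))
      exact ⟨v, IndepSet.single_injective (by rw [hθ, hv, α.apply_symm_apply])⟩
  refine ⟨⟨Equiv.ofBijective θ bijective, fun {v w} => not_iff_not.1 ?_⟩⟩
  rw [← IndepSet.exists_single_le_iff, ← IndepSet.exists_single_le_iff, α.surjective.exists]
  simp [hθ]

end IndependentSets

section FixedPoints

variable {X Y : Type*} [TopologicalSpace X] [TopologicalSpace Y]

/-- A fixed point that no other fixed point is connected to. -/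
def IsSourceFixedPt (F : X → X) (p : X) : Prop :=
  IsFixedPt F p ∧ ∀ q, IsFixedPt F q → ConnectsTo F q p → q = p

/-- The fixed points that `p` is connected to. -/
def fixedPointsAbove (F : X → X) (p : X) : Set X :=
  {q | IsFixedPt F q ∧ ConnectsTo F p q}

variable {F : X → X} {G : Y → Y} {h : X ≃ₜ Y}

theorem isFixedPt_map_iff (hh : Semiconj h F G) {p : X} : IsFixedPt G (h p) ↔ IsFixedPt F p := by
  rw [IsFixedPt, ← hh.eq, h.injective.eq_iff, IsFixedPt]

theorem IsSourceFixedPt.map {p : X} (hp : IsSourceFixedPt F p) (hh : Semiconj h F G) :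
    IsSourceFixedPt G (h p) := by
  refine ⟨(isFixedPt_map_iff hh).2 hp.1, h.surjective.forall.2 fun q hq hqp => ?_⟩
  rw [hp.2 q ((isFixedPt_map_iff hh).1 hq) ((connectsTo_map_iff hh).1 hqp)]

/-- A conjugacy transports the fixed points above `p`, together with the relation between them. -/
def fixedPointsAboveCongr (hh : Semiconj h F G) (p : X) :
    Subrel (ConnectsTo F) (· ∈ fixedPointsAbove F p) ≃r
      Subrel (ConnectsTo G) (· ∈ fixedPointsAbove G (h p)) where
  toEquiv := h.toEquiv.subtypeEquiv fun _ =>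
    and_congr (isFixedPt_map_iff hh).symm (connectsTo_map_iff hh).symm
  map_rel_iff' := connectsTo_map_iff hh

end FixedPoints

section Recovery

variable {V W : Type*} {G : SimpleGraph V} {H : SimpleGraph W}

theorem isSourceFixedPt_graphHomeomorph_iff {p : GraphState V} :
    IsSourceFixedPt (graphHomeomorph G) p ↔ ∃ t, p = restPoint ∅ t := by
  constructor
  · rintro ⟨hp, hsource⟩
    obtain ⟨S, t, hS, rfl⟩ := exists_eq_restPoint_of_graphHomeomorph_eq hp
    exact ⟨t, (hsource _ (graphHomeomorph_restPoint (pairwise_empty _) t)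
      (connectsTo_restPoint hS (empty_subset S) t)).symm⟩
  · rintro ⟨t, rfl⟩
    refine ⟨graphHomeomorph_restPoint (pairwise_empty _) t, fun q hq hqp => ?_⟩
    obtain ⟨S, u, -, rfl⟩ := exists_eq_restPoint_of_graphHomeomorph_eq hq
    rw [connectsTo_restPoint_iff (pairwise_empty _), subset_empty_iff] at hqp
    exact restPoint_inj.2 hqp

theorem mem_fixedPointsAbove_restPoint_iff {t : V × V → Bool} {p : GraphState V} :
    p ∈ fixedPointsAbove (graphHomeomorph G) (restPoint ∅ t) ↔
      ∃ S : IndepSet G, restPoint S.1 t = p := by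
  constructor
  · rintro ⟨hp, hconn⟩
    obtain ⟨S, u, hS, rfl⟩ := exists_eq_restPoint_of_graphHomeomorph_eq hp
    exact ⟨⟨S, hS⟩, by rw [((connectsTo_restPoint_iff hS).1 hconn).2]⟩
  · rintro ⟨S, rfl⟩
    exact ⟨graphHomeomorph_restPoint S.2 t, connectsTo_restPoint S.2 (empty_subset _) t⟩

/-- Independent sets as the fixed points above a source. -/
noncomputable def indepSetRelIso (G : SimpleGraph V) (t : V × V → Bool) :
    ((· ≤ ·) : IndepSet G → IndepSet G → Prop) ≃r Subrel (ConnectsTo (graphHomeomorph G))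
      (· ∈ fixedPointsAbove (graphHomeomorph G) (restPoint ∅ t)) where
  toEquiv := Equiv.ofBijective
    (fun S => ⟨restPoint S.1 t, mem_fixedPointsAbove_restPoint_iff.2 ⟨S, rfl⟩⟩)
    ⟨fun _ _ h => Subtype.ext (restPoint_inj.1 (congrArg Subtype.val h)).1,
      fun p => (mem_fixedPointsAbove_restPoint_iff.1 p.2).imp fun _ => Subtype.ext⟩
  map_rel_iff' := (connectsTo_restPoint_iff (Subtype.property _)).trans (and_iff_left rfl)

/-- Reindexing the vertices of a graph state. -/
def graphStateCongr (σ : V ≃ W) : GraphState V ≃ₜ GraphState W where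
  toFun z := (fun w => z.1 (σ.symm w), fun a => z.2 (σ.symm a.1, σ.symm a.2))
  invFun z := (fun v => z.1 (σ v), fun a => z.2 (σ a.1, σ a.2))
  left_inv z := by simp
  right_inv z := by simp
  continuous_toFun := by fun_prop
  continuous_invFun := by fun_prop

theorem isConjugate_graphHomeomorph (θ : G ≃g H) :
    IsConjugate (graphHomeomorph G) (graphHomeomorph H) := by
  have mem_northEdges_iff (x : V → CantorK) (a : W × W) :
      a ∈ northEdges H (fun w => x (θ.symm w)) ↔ (θ.symm a.1, θ.symm a.2) ∈ northEdges G x := by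
    simp [northEdges, θ.symm.map_adj_iff]
  refine ⟨graphStateCongr θ.toEquiv, fun z => Prod.ext rfl (funext fun a => ?_)⟩
  classical exact if_congr (mem_northEdges_iff z.1 a).symm rfl rfl

theorem isConjugate_graphHomeomorph_iff :
    IsConjugate (graphHomeomorph G) (graphHomeomorph H) ↔ Nonempty (G ≃g H) := by
  refine ⟨fun ⟨h, hh⟩ => ?_, fun ⟨θ⟩ => isConjugate_graphHomeomorph θ⟩
  let t : V × V → Bool := fun _ => false
  obtain ⟨u, hu⟩ := isSourceFixedPt_graphHomeomorph_iff.1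
    ((isSourceFixedPt_graphHomeomorph_iff.2 ⟨t, rfl⟩).map hh)
  have α := fixedPointsAboveCongr hh (restPoint ∅ t)
  rw [hu] at α
  exact nonempty_iso_of_indepSet_orderIso
    (((indepSetRelIso G t).trans α).trans (indepSetRelIso H u).symm)

end Recovery

section Gadget

/-- The types of vertices of the graph coding a binary relation. A point of the relation becomes a
source and a target, which are linked by a common neighbour and told apart by their numbers of
leaves. -/
inductive GadgetKind
  | source
  | target
  | link
  | sourceLeaf
  | targetLeaf₁
  | targetLeaf₂

namespace GadgetKind

instance : Countable GadgetKind :=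
  Injective.countable (f := GadgetKind.ctorIdx) <| by rintro ⟨⟩ ⟨⟩ h <;> first | rfl | cases h

instance : Nonempty GadgetKind := ⟨source⟩

/-- The types of the leaves attached to a vertex of a given type. -/
def leaves : GadgetKind → Set GadgetKind
  | source => {sourceLeaf}
  | target => {targetLeaf₁, targetLeaf₂}
  | _ => ∅

theorem encard_leaves_eq_one_iff {k : GadgetKind} : k.leaves.encard = 1 ↔ k = source := by
  cases k <;> simp [leaves, encard_pair]

theorem encard_leaves_eq_two_iff {k : GadgetKind} : k.leaves.encard = 2 ↔ k = target := by
  cases k <;> simp [leaves, encard_pair]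

end GadgetKind

open GadgetKind

variable {α β : Type*}

/-- The edges of the graph coding a binary relation, each listed in one direction. -/
def GadgetArrow (r : α → α → Prop) : α × GadgetKind → α × GadgetKind → Prop
  | (i, source), (j, target) => r i j
  | (i, source), (j, link) | (i, target), (j, link) | (i, source), (j, sourceLeaf)
  | (i, target), (j, targetLeaf₁) | (i, target), (j, targetLeaf₂) => i = j
  | _, _ => False

/-- The graph coding a binary relation `r`: related points `i` and `j` are recorded by an edge from
the source of `i` to the target of `j`. -/
def gadgetGraph (r : α → α → Prop) : SimpleGraph (α × GadgetKind) where
  Adj v w := GadgetArrow r v w ∨ GadgetArrow r w v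
  symm := ⟨fun _ _ => Or.symm⟩
  loopless := ⟨by rintro ⟨i, k⟩; cases k <;> simp [GadgetArrow]⟩

theorem isClopen_setOf_gadgetGraph_adj {P : Type*} [TopologicalSpace P] {r : P → α → α → Prop}
    (hr : ∀ i j, IsClopen {p | r p i j}) (v w : α × GadgetKind) :
    IsClopen {p | (gadgetGraph (r p)).Adj v w} := by
  have isClopen_arrow (v w : α × GadgetKind) : IsClopen {p | GadgetArrow (r p) v w} := by
    obtain ⟨i, k⟩ := v
    obtain ⟨j, l⟩ := w
    cases k <;> cases l <;>
      first | exact hr i j | exact ⟨isClosed_const, isOpen_const⟩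
  exact (isClopen_arrow v w).union (isClopen_arrow w v)

/-- The vertices whose only neighbour is `w`. -/
def leavesAt {V : Type*} (G : SimpleGraph V) (w : V) : Set V :=
  {v | ∀ u, G.Adj v u ↔ u = w}

theorem encard_leavesAt_map {V W : Type*} {G : SimpleGraph V} {H : SimpleGraph W} (θ : G ≃g H)
    (w : V) : (leavesAt H (θ w)).encard = (leavesAt G w).encard := by
  rw [← encard_preimage_of_bijective θ.bijective]
  congr 1
  ext v
  simp [leavesAt, θ.surjective.forall, θ.map_adj_iff]

variable {r : α → α → Prop} {s : β → β → Prop}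

theorem gadgetGraph_adj_source_target {i j : α} :
    (gadgetGraph r).Adj (i, source) (j, target) ↔ r i j := by
  simp [gadgetGraph, GadgetArrow]

theorem exists_gadgetGraph_adj_source_target_iff {i j : α} :
    (∃ v, (gadgetGraph r).Adj (i, source) v ∧ (gadgetGraph r).Adj (j, target) v) ↔ i = j := by
  constructor
  · rintro ⟨⟨k, l⟩, h1, h2⟩
    cases l <;> simp_all [gadgetGraph, GadgetArrow]
  · rintro rfl
    exact ⟨(i, link), by simp [gadgetGraph, GadgetArrow]⟩

theorem gadgetGraph_adj_leaf_iff {i : α} {k l : GadgetKind} (hl : l ∈ k.leaves)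
    (v : α × GadgetKind) : (gadgetGraph r).Adj (i, l) v ↔ v = (i, k) := by
  obtain ⟨j, m⟩ := v
  cases k
  case source =>
    obtain rfl := hl
    cases m <;> simp [gadgetGraph, GadgetArrow]
  case target =>
    obtain rfl | rfl := hl <;> cases m <;> simp [gadgetGraph, GadgetArrow]
  all_goals exact hl.elim

theorem leavesAt_gadgetGraph (i : α) (k : GadgetKind) :
    leavesAt (gadgetGraph r) (i, k) = Prod.mk i '' k.leaves := by
  refine Subset.antisymm ?_ (image_subset_iff.2 fun l hl => gadgetGraph_adj_leaf_iff hl)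
  rintro ⟨j, l⟩ h
  have eq_of_adj {m n : GadgetKind} (hm : (gadgetGraph r).Adj (j, l) (j, m))
      (hn : (gadgetGraph r).Adj (j, l) (j, n)) : m = n :=
    congrArg Prod.snd (((h _).1 hm).trans ((h _).1 hn).symm)
  have mem_of_mem_leaves {m : GadgetKind} (hl : l ∈ m.leaves) : (j, l) ∈ Prod.mk i '' k.leaves := by
    obtain ⟨rfl, rfl⟩ := Prod.ext_iff.1 ((h (j, m)).1 ((gadgetGraph_adj_leaf_iff hl _).2 rfl))
    exact mem_image_of_mem _ hl
  cases l
  case source =>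
    cases @eq_of_adj link sourceLeaf (by simp [gadgetGraph, GadgetArrow])
      (by simp [gadgetGraph, GadgetArrow])
  case target =>
    cases @eq_of_adj link targetLeaf₁ (by simp [gadgetGraph, GadgetArrow])
      (by simp [gadgetGraph, GadgetArrow])
  case link =>
    cases @eq_of_adj source target (by simp [gadgetGraph, GadgetArrow])
      (by simp [gadgetGraph, GadgetArrow])
  case sourceLeaf => exact @mem_of_mem_leaves source rfl
  case targetLeaf₁ => exact @mem_of_mem_leaves target (Or.inl rfl)
  case targetLeaf₂ => exact @mem_of_mem_leaves target (Or.inr rfl)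

theorem encard_leavesAt_gadgetGraph (v : α × GadgetKind) :
    (leavesAt (gadgetGraph r) v).encard = v.2.leaves.encard := by
  rw [leavesAt_gadgetGraph, (Prod.mk_right_injective _).encard_image]

theorem encard_leaves_map (θ : gadgetGraph r ≃g gadgetGraph s) (v : α × GadgetKind) :
    (θ v).2.leaves.encard = v.2.leaves.encard := by
  rw [← encard_leavesAt_gadgetGraph (r := r), ← encard_leavesAt_gadgetGraph (r := s),
    encard_leavesAt_map]

theorem exists_map_source_eq (θ : gadgetGraph r ≃g gadgetGraph s) (i : α) :
    ∃ j, θ (i, source) = (j, source) :=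
  ⟨_, Prod.ext rfl <| encard_leaves_eq_one_iff.1 <|
    (encard_leaves_map θ _).trans (encard_leaves_eq_one_iff.2 rfl)⟩

theorem map_target_eq (θ : gadgetGraph r ≃g gadgetGraph s) {i : α} {j : β}
    (h : θ (i, source) = (j, source)) : θ (i, target) = (j, target) := by
  have h_target : θ (i, target) = ((θ (i, target)).1, target) :=
    Prod.ext rfl <| encard_leaves_eq_two_iff.1 <|
      (encard_leaves_map θ _).trans (encard_leaves_eq_two_iff.2 rfl)
  obtain ⟨v, hv, hv'⟩ := (exists_gadgetGraph_adj_source_target_iff (r := r) (i := i)).2 rfl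
  rw [← θ.map_adj_iff, h] at hv
  rw [← θ.map_adj_iff, h_target] at hv'
  rw [h_target, exists_gadgetGraph_adj_source_target_iff.1 ⟨θ v, hv, hv'⟩]

theorem nonempty_relIso_of_gadgetGraph_iso (θ : gadgetGraph r ≃g gadgetGraph s) :
    Nonempty (r ≃r s) := by
  choose f hf using exists_map_source_eq θ
  choose g hg using exists_map_source_eq θ.symm
  have bijective : Bijective f := by
    refine ⟨fun i j h => ?_, fun j => ⟨g j, ?_⟩⟩
    · have hij : θ (i, source) = θ (j, source) := by rw [hf, hf, h]
      exact congrArg Prod.fst (θ.injective hij)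
    · exact congrArg Prod.fst ((hf (g j)).symm.trans (θ.symm_apply_eq.1 (hg j)).symm)
  have rel_iff (i j : α) : s (f i) (f j) ↔ r i j := by
    rw [← gadgetGraph_adj_source_target (r := s), ← gadgetGraph_adj_source_target (r := r), ← hf,
      ← map_target_eq θ (hf j), θ.map_adj_iff]
  exact ⟨⟨Equiv.ofBijective f bijective, rel_iff _ _⟩⟩

/-- An isomorphism of relations acts on the graphs coding them, preserving the types of vertices. -/
def gadgetGraphCongr (θ : r ≃r s) : gadgetGraph r ≃g gadgetGraph s where
  toEquiv := θ.toEquiv.prodCongr (Equiv.refl _)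
  map_rel_iff' := by
    have gadgetArrow_iff (v w : α × GadgetKind) :
        GadgetArrow s (θ v.1, v.2) (θ w.1, w.2) ↔ GadgetArrow r v w := by
      obtain ⟨i, k⟩ := v
      obtain ⟨j, l⟩ := w
      cases k <;> cases l <;> simp [GadgetArrow, θ.map_rel_iff]
    exact fun {v w} => or_congr (gadgetArrow_iff v w) (gadgetArrow_iff w v)

theorem nonempty_gadgetGraph_iso_iff :
    Nonempty (gadgetGraph r ≃g gadgetGraph s) ↔ Nonempty (r ≃r s) :=
  ⟨fun ⟨θ⟩ => nonempty_relIso_of_gadgetGraph_iso θ, fun ⟨θ⟩ => ⟨gadgetGraphCongr θ⟩⟩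

end Gadget

section Reduction

theorem nonempty_graphState_homeomorph_cantorK (V : Type*) [Countable V] [Nonempty V] :
    Nonempty (GraphState V ≃ₜ CantorK) := by
  obtain ⟨σ⟩ : Nonempty ((V × ℕ) ⊕ (V × V) ≃ ℕ) := nonempty_equiv_of_countable
  let curry : (V × ℕ → Bool) ≃ₜ (V → CantorK) :=
    { toEquiv := Equiv.curry _ _ _
      continuous_toFun := continuous_pi fun v => continuous_pi fun n => continuous_apply (v, n)
      continuous_invFun := continuous_pi fun a =>
        (continuous_apply a.2).comp (continuous_apply (A := fun _ : V => CantorK) a.1) }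
  exact ⟨(curry.symm.prodCongr (Homeomorph.refl _)).trans
    (Homeomorph.sumArrowHomeomorphProdArrow.symm.trans
      (Homeomorph.piCongrLeft (Y := fun _ => Bool) σ))⟩

/-- The graph system of the relation coded by `x`, moved to the Cantor space along `Θ`. -/
noncomputable def gadgetPair (Θ : GraphState (ℕ × GadgetKind) ≃ₜ CantorK) (x : ℕ × ℕ → Bool) :
    CantorPairs :=
  CantorPairs.equivHomeomorph.symm
    ((Θ.symm.trans (graphHomeomorph (gadgetGraph (RelOf x)))).trans Θ)

theorem continuous_gadgetPair (Θ : GraphState (ℕ × GadgetKind) ≃ₜ CantorK) :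
    Continuous (gadgetPair Θ) := by
  have isClopen_adj (v w : ℕ × GadgetKind) :
      IsClopen {a : (ℕ × ℕ → Bool) × CantorK | (gadgetGraph (RelOf a.1)).Adj v w} :=
    isClopen_setOf_gadgetGraph_adj (fun i j => (isClopen_discrete {true}).preimage
      ((continuous_apply (i, j)).comp continuous_fst)) v w
  have continuous_symm : Continuous fun a : (ℕ × ℕ → Bool) × CantorK => Θ.symm a.2 :=
    Θ.symm.continuous.comp continuous_snd
  exact CantorPairs.continuous_equivHomeomorph_symm
    (Θ.continuous.comp (continuous_graphHomeomorph isClopen_adj continuous_symm))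
    (Θ.continuous.comp (continuous_graphHomeomorph_symm isClopen_adj continuous_symm))

theorem conjRel_gadgetPair_iff {Θ : GraphState (ℕ × GadgetKind) ≃ₜ CantorK} {x y : ℕ × ℕ → Bool} :
    ConjRel (gadgetPair Θ x) (gadgetPair Θ y) ↔ GraphIso x y := by
  rw [CantorPairs.conjRel_iff_isConjugate, gadgetPair, gadgetPair, Equiv.apply_symm_apply,
    Equiv.apply_symm_apply, isConjugate_symm_trans_trans_iff, isConjugate_graphHomeomorph_iff,
    nonempty_gadgetGraph_iso_iff, graphIso_iff_nonempty_relIso]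

end Reduction

/-- Camerlo–Gao: topological conjugacy of homeomorphisms of the Cantor set is Borel
bireducible with isomorphism of countable graphs. -/
theorem camerlo_gao :
    (∃ Φ : ((ℕ × ℕ) → Bool) → CantorPairs, Measurable Φ ∧
      ∀ x y : (ℕ × ℕ) → Bool, GraphIso x y ↔ ConjRel (Φ x) (Φ y)) ∧
    (∃ Ψ : CantorPairs → ((ℕ × ℕ) → Bool), Measurable Ψ ∧
      ∀ p q : CantorPairs, ConjRel p q ↔ GraphIso (Ψ p) (Ψ q)) := by
  obtain ⟨Θ⟩ := nonempty_graphState_homeomorph_cantorK (ℕ × GadgetKind)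
  obtain ⟨e⟩ : Nonempty (ℕ ≃ Clopens CantorK) := nonempty_equiv_of_countable
  refine ⟨⟨gadgetPair Θ, ?_, fun x y => conjRel_gadgetPair_iff.symm⟩,
    fun p => relCode e fun U V => MapsTo p.1.1 U V,
    measurable_relCode e measurableSet_setOf_mapsTo, fun p q => ?_⟩
  · exact (continuous_gadgetPair Θ).measurable
  · rw [graphIso_relCode_iff, CantorPairs.conjRel_iff_isConjugate]
    exact isConjugate_iff_nonempty_mapsTo_relIso
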